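/- Let S = ⟨S, δ, L⟩ and S' = ⟨S', δ', L'⟩ be fuzzy labeled transition systems that are witnessed w.r.t. fposΔPDL, and let Z be a crisp directed simulation between S and S'. Then for every formula φ of fposΔPDL and all states x ∈ S, x' ∈ S', if Z(x,x') holds then φ^S(x) ≤ φ^S'(x'). -/

import Mathlib

open unitInterval

noncomputable section
attribute [local instance] Classical.propDecidable

instance : Fact ((0:ℝ) ≤ 1) := ⟨zero_le_one⟩

/-- A left-continuous t-norm on the unit interval `[0,1]`: a commutative, associative
binary operation with neutral element `1`, increasing in both arguments, that
distributes over suprema of nonempty sets (left-continuity). -/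
structure Tnorm where
  mul : I → I → I
  mul_comm : ∀ x y, mul x y = mul y x
  mul_assoc : ∀ x y z, mul (mul x y) z = mul x (mul y z)
  mul_one : ∀ x, mul x 1 = x
  mul_le_mul : ∀ {a b c d : I}, a ≤ b → c ≤ d → mul a c ≤ mul b d
  left_continuous : ∀ (x : I) (s : Set I), s.Nonempty → mul x (sSup s) = sSup (mul x '' s)

/-- The residuum of a t-norm: `(x ⇒ y) = sup {z | z ⊗ x ≤ y}`. -/
def Tnorm.res (T : Tnorm) (x y : I) : I := sSup {z : I | T.mul z x ≤ y}

/-- A fuzzy labeled transition system over actions `A`, propositions `P`, states `St`. -/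
structure FLTS (A P St : Type) where
  delta : St → A → St → I
  label : St → P → I

/-- A crisp directed simulation between two FLTSs. -/
def IsDirSimulation {A P S S' : Type} (M : FLTS A P S) (M' : FLTS A P S')
    (Z : S → S' → Prop) : Prop :=
  (∀ x x', Z x x' → ∀ p, M.label x p ≤ M'.label x' p) ∧
  (∀ x y x' (ρ : A), Z x x' → 0 < M.delta x ρ y →
    ∃ y', M.delta x ρ y ≤ M'.delta x' ρ y' ∧ Z y y') ∧
  (∀ x x' y' (ρ : A), Z x x' → 0 < M'.delta x' ρ y' →
    ∃ y, M'.delta x' ρ y' ≤ M.delta x ρ y ∧ Z y y')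

mutual
/-- Formulas of fposΔPDL. -/
inductive PForm (A P : Type) : Type
  | const : I → PForm A P
  | prop : P → PForm A P
  | baaz : PForm A P → PForm A P
  | and : PForm A P → PForm A P → PForm A P
  | or : PForm A P → PForm A P → PForm A P
  | impl : I → PForm A P → PForm A P
  | dia : PEProg A P → PForm A P → PForm A P
  | box : PUProg A P → PForm A P → PForm A P
/-- Programs of fpos∃ΔPDL. -/
inductive PEProg (A P : Type) : Type
  | act : A → PEProg A P
  | comp : PEProg A P → PEProg A P → PEProg A P
  | union : PEProg A P → PEProg A P → PEProg A P
  | star : PEProg A P → PEProg A P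
  | test : PForm A P → PEProg A P
/-- Programs of fpos∀ΔPDL; `testImp φ a` is the program `(φ→a)?`. -/
inductive PUProg (A P : Type) : Type
  | act : A → PUProg A P
  | comp : PUProg A P → PUProg A P → PUProg A P
  | union : PUProg A P → PUProg A P → PUProg A P
  | star : PUProg A P → PUProg A P
  | testImp : PForm A P → I → PUProg A P
end

/-- The ⊗-product of the values of `r` along the path `x :: l`. -/
def chainProd (T : Tnorm) {St : Type} (r : St → St → I) : St → List St → I
  | _, [] => 1
  | x, y :: l => T.mul (r x y) (chainProd T r y l)

mutual
/-- Semantics of fposΔPDL formulas. -/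
def pformSem (T : Tnorm) {A P St : Type} (M : FLTS A P St) : PForm A P → St → I
  | .const a, _ => a
  | .prop p, x => M.label x p
  | .baaz φ, x => if pformSem T M φ x = 1 then 1 else 0
  | .and φ ψ, x => min (pformSem T M φ x) (pformSem T M ψ x)
  | .or φ ψ, x => max (pformSem T M φ x) (pformSem T M ψ x)
  | .impl a φ, x => T.res a (pformSem T M φ x)
  | .dia α φ, x => ⨆ y, T.mul (peSem T M α x y) (pformSem T M φ y)
  | .box γ φ, x => ⨅ y, T.res (puSem T M γ x y) (pformSem T M φ y)
/-- Semantics of fpos∃ΔPDL programs. -/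
def peSem (T : Tnorm) {A P St : Type} (M : FLTS A P St) : PEProg A P → St → St → I
  | .act ρ, x, y => M.delta x ρ y
  | .comp α β, x, y => ⨆ z, T.mul (peSem T M α x z) (peSem T M β z y)
  | .union α β, x, y => max (peSem T M α x y) (peSem T M β x y)
  | .star α, x, y =>
      sSup {v : I | ∃ l : List St, l.getLastD x = y ∧ v = chainProd T (peSem T M α) x l}
  | .test φ, x, y => if x = y then pformSem T M φ x else 0
/-- Semantics of fpos∀ΔPDL programs. -/
def puSem (T : Tnorm) {A P St : Type} (M : FLTS A P St) : PUProg A P → St → St → I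
  | .act ρ, x, y => M.delta x ρ y
  | .comp α β, x, y => ⨆ z, T.mul (puSem T M α x z) (puSem T M β z y)
  | .union α β, x, y => max (puSem T M α x y) (puSem T M β x y)
  | .star α, x, y =>
      sSup {v : I | ∃ l : List St, l.getLastD x = y ∧ v = chainProd T (puSem T M α) x l}
  | .testImp φ a, x, y => if x = y then T.res (pformSem T M φ x) a else 0
end

/-- An FLTS is witnessed w.r.t. fposΔPDL: every supremum (resp. infimum) occurring
in the semantic clauses is attained by a greatest (resp. least) element. -/
def WitnessedP (T : Tnorm) {A P St : Type} (M : FLTS A P St) : Prop :=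
  (∀ (α : PEProg A P) (φ : PForm A P) (x : St), ∃ y : St, ∀ z : St,
      T.mul (peSem T M α x z) (pformSem T M φ z) ≤
        T.mul (peSem T M α x y) (pformSem T M φ y)) ∧
  (∀ (γ : PUProg A P) (φ : PForm A P) (x : St), ∃ y : St, ∀ z : St,
      T.res (puSem T M γ x y) (pformSem T M φ y) ≤
        T.res (puSem T M γ x z) (pformSem T M φ z)) ∧
  (∀ (α β : PEProg A P) (x y : St), ∃ z : St, ∀ w : St,
      T.mul (peSem T M α x w) (peSem T M β w y) ≤
        T.mul (peSem T M α x z) (peSem T M β z y)) ∧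
  (∀ (α β : PUProg A P) (x y : St), ∃ z : St, ∀ w : St,
      T.mul (puSem T M α x w) (puSem T M β w y) ≤
        T.mul (puSem T M α x z) (puSem T M β z y)) ∧
  (∀ (α : PEProg A P) (x y : St), ∃ l : List St, l.getLastD x = y ∧
      ∀ l' : List St, l'.getLastD x = y →
        chainProd T (peSem T M α) x l' ≤ chainProd T (peSem T M α) x l) ∧
  (∀ (α : PUProg A P) (x y : St), ∃ l : List St, l.getLastD x = y ∧
      ∀ l' : List St, l'.getLastD x = y →
        chainProd T (puSem T M α) x l' ≤ chainProd T (puSem T M α) x l)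

/-!
The two systems are compared through strict lower bounds: a bound `c < r x y` on the degree of a
program in one system is transferred to a related pair of states in the other. By left-continuity,
`c < a ⊗ b` already forces `c < a' ⊗ b'` for some `a' < a` and `b' < b`, and a supremum exceeds `c`
only if some member does, so strict lower bounds pass through compositions and iterations, which
are suprema of products. Existential programs are simulated from left to right, universal ones from
right to left, because `(φ → a)?` and `[α]φ` reverse the order in the first argument of the
residuum.
-/

namespace Tnorm

variable (T : Tnorm)

lemma mul_le_left (a b : I) : T.mul a b ≤ a :=
  (T.mul_le_mul le_rfl unitInterval.le_one').trans_eq (T.mul_one a)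

lemma mul_le_right (a b : I) : T.mul a b ≤ b :=
  T.mul_comm a b ▸ T.mul_le_left b a

lemma exists_lt_mul_right {a b c : I} (hc : c < T.mul a b) : ∃ b' < b, c < T.mul a b' := by
  have b_pos : 0 < b := unitInterval.nonneg'.trans_lt (hc.trans_le (T.mul_le_right a b))
  have mul_eq_sSup : T.mul a b = sSup (T.mul a '' Set.Iio b) := by
    rw [← T.left_continuous a (Set.Iio b) ⟨0, b_pos⟩, (Order.IsSuccPrelimit.of_dense b).sSup_Iio]
  rw [mul_eq_sSup, lt_sSup_iff] at hc
  simpa only [Set.exists_mem_image, Set.mem_Iio] using hc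

lemma exists_lt_mul_left {a b c : I} (hc : c < T.mul a b) : ∃ a' < a, c < T.mul a' b := by
  obtain ⟨a', ha', hca'⟩ := T.exists_lt_mul_right (T.mul_comm a b ▸ hc)
  exact ⟨a', ha', T.mul_comm b a' ▸ hca'⟩

lemma mul_res_le (a b : I) : T.mul a (T.res a b) ≤ b := by
  have nonempty : {z : I | T.mul z a ≤ b}.Nonempty :=
    ⟨0, (T.mul_le_left 0 a).trans unitInterval.nonneg'⟩
  rw [res, T.left_continuous a _ nonempty, sSup_le_iff, Set.forall_mem_image]
  exact fun z hz => T.mul_comm a z ▸ hz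

lemma le_res_iff {a b z : I} : z ≤ T.res a b ↔ T.mul z a ≤ b :=
  ⟨fun hz => (T.mul_comm z a ▸ T.mul_le_mul le_rfl hz).trans (T.mul_res_le a b),
    fun hz => le_sSup hz⟩

lemma res_le_res {a a' b b' : I} (ha : a' ≤ a) (hb : b ≤ b') : T.res a b ≤ T.res a' b' :=
  sSup_le_sSup fun _ hz => (T.mul_le_mul le_rfl ha).trans (hz.trans hb)

/-- The sup-`⊗` composition of fuzzy relations, which interprets `α∘β`. -/
def relComp {S : Type*} (r q : S → S → I) : S → S → I :=
  fun x y => ⨆ z, T.mul (r x z) (q z y)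

/-- The reflexive-transitive closure of a fuzzy relation, which interprets `α*`. A path from `x`
to `y` is encoded by the list of its states after `x`, so the empty list is a path from `x`
to `x`. -/
def relStar {S : Type} (r : S → S → I) : S → S → I :=
  fun x y => sSup {v : I | ∃ l : List S, l.getLastD x = y ∧ v = chainProd T r x l}

end Tnorm

/-- The diagonal fuzzy relation with values `f`, which interprets tests. -/
def relTest {S : Type*} (f : S → I) : S → S → I :=
  fun x y => if x = y then f x else 0

/-- `FuzzySim Z r r'`: the crisp relation `Z` simulates the fuzzy relation `r` by `r'`. Strict lower
bounds on `r x y` are matched rather than `r x y` itself: they pass through suprema, whereas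
`r x y ≤ r' x' y'` need not be reached by a single `y'`. -/
def FuzzySim {S S' : Type*} (Z : S → S' → Prop) (r : S → S → I) (r' : S' → S' → I) : Prop :=
  ∀ ⦃x x'⦄, Z x x' → ∀ ⦃y c⦄, c < r x y → ∃ y', c < r' x' y' ∧ Z y y'

namespace FuzzySim

section Programs

variable {S S' : Type*} {Z : S → S' → Prop} {r q : S → S → I} {r' q' : S' → S' → I}

lemma of_forall_exists_le
    (h : ∀ x y x', Z x x' → 0 < r x y → ∃ y', r x y ≤ r' x' y' ∧ Z y y') : FuzzySim Z r r' := by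
  intro x x' hx y c hc
  obtain ⟨y', hle, hy⟩ := h x y x' hx (unitInterval.nonneg'.trans_lt hc)
  exact ⟨y', hc.trans_le hle, hy⟩

protected lemma relTest {f : S → I} {f' : S' → I} (hf : ∀ x x', Z x x' → f x ≤ f' x') :
    FuzzySim Z (relTest f) (relTest f') := by
  intro x x' hx y c hc
  rcases eq_or_ne x y with rfl | hxy
  · refine ⟨x', ?_, hx⟩
    simp only [relTest, if_true] at hc ⊢
    exact hc.trans_le (hf x x' hx)
  · simp only [relTest, if_neg hxy] at hc
    exact absurd hc unitInterval.nonneg'.not_gt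

protected lemma max (hr : FuzzySim Z r r') (hq : FuzzySim Z q q') :
    FuzzySim Z (fun x y => max (r x y) (q x y)) (fun x y => max (r' x y) (q' x y)) := by
  intro x x' hx y c hc
  rcases lt_max_iff.mp hc with hcr | hcq
  · obtain ⟨y', hc', hy⟩ := hr hx hcr
    exact ⟨y', lt_max_of_lt_left hc', hy⟩
  · obtain ⟨y', hc', hy⟩ := hq hx hcq
    exact ⟨y', lt_max_of_lt_right hc', hy⟩

variable (T : Tnorm)

protected lemma relComp (hr : FuzzySim Z r r') (hq : FuzzySim Z q q') :
    FuzzySim Z (T.relComp r q) (T.relComp r' q') := by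
  intro x x' hx y c hc
  obtain ⟨z, hcz⟩ := lt_iSup_iff.mp hc
  obtain ⟨b, hb, hcb⟩ := T.exists_lt_mul_right hcz
  obtain ⟨a, ha, hcab⟩ := T.exists_lt_mul_left hcb
  obtain ⟨z', ha', hz⟩ := hr hx ha
  obtain ⟨y', hb', hy⟩ := hq hz hb
  refine ⟨y', lt_iSup_iff.mpr ⟨z', ?_⟩, hy⟩
  exact hcab.trans_le (T.mul_le_mul ha'.le hb'.le)

lemma iSup_mul_le_iSup_mul {f : S → I} {f' : S' → I} (hr : FuzzySim Z r r')
    (hf : ∀ x x', Z x x' → f x ≤ f' x') {x : S} {x' : S'} (hx : Z x x') :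
    ⨆ y, T.mul (r x y) (f y) ≤ ⨆ y', T.mul (r' x' y') (f' y') := by
  refine iSup_le fun y => le_of_forall_lt fun c hc => ?_
  obtain ⟨a, ha, hca⟩ := T.exists_lt_mul_left hc
  obtain ⟨y', ha', hy⟩ := hr hx ha
  refine lt_iSup_iff.mpr ⟨y', ?_⟩
  exact hca.trans_le (T.mul_le_mul ha'.le (hf y y' hy))

lemma iInf_res_le_iInf_res {f : S → I} {f' : S' → I} (hr : FuzzySim (flip Z) r' r)
    (hf : ∀ x x', Z x x' → f x ≤ f' x') {x : S} {x' : S'} (hx : Z x x') :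
    ⨅ y, T.res (r x y) (f y) ≤ ⨅ y', T.res (r' x' y') (f' y') := by
  refine le_iInf fun y' => T.le_res_iff.mpr (le_of_forall_lt fun c hc => ?_)
  obtain ⟨b, hb, hcb⟩ := T.exists_lt_mul_right hc
  obtain ⟨y, hb', hy⟩ := hr hx hb
  calc
    c < T.mul (⨅ y, T.res (r x y) (f y)) b := hcb
    _ ≤ T.mul (⨅ y, T.res (r x y) (f y)) (r x y) := T.mul_le_mul le_rfl hb'.le
    _ ≤ f y := T.le_res_iff.mp (iInf_le _ y)
    _ ≤ f' y' := hf y y' hy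

end Programs

section Iteration

variable {S S' : Type} {Z : S → S' → Prop} {r : S → S → I} {r' : S' → S' → I} (T : Tnorm)

lemma exists_lt_chainProd (hr : FuzzySim Z r r') {c : I} {x : S} {x' : S'} (hx : Z x x')
    {l : List S} (hc : c < chainProd T r x l) :
    ∃ l' : List S', c < chainProd T r' x' l' ∧ Z (l.getLastD x) (l'.getLastD x') := by
  induction l generalizing c x x' with
  | nil => exact ⟨[], hc, hx⟩
  | cons y l ih =>
    obtain ⟨b, hb, hcb⟩ := T.exists_lt_mul_right hc
    obtain ⟨a, ha, hcab⟩ := T.exists_lt_mul_left hcb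
    obtain ⟨y', ha', hy⟩ := hr hx ha
    obtain ⟨l', hb', hlast⟩ := ih hy hb
    refine ⟨y' :: l', hcab.trans_le (T.mul_le_mul ha'.le hb'.le), ?_⟩
    simpa only [List.getLastD_cons] using hlast

protected lemma relStar (hr : FuzzySim Z r r') : FuzzySim Z (T.relStar r) (T.relStar r') := by
  intro x x' hx y c hc
  obtain ⟨_, ⟨l, rfl, rfl⟩, hcl⟩ := lt_sSup_iff.mp hc
  obtain ⟨l', hcl', hlast⟩ := hr.exists_lt_chainProd T hx hcl
  exact ⟨l'.getLastD x', lt_sSup_iff.mpr ⟨_, ⟨l', rfl, rfl⟩, hcl'⟩, hlast⟩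

end Iteration

end FuzzySim

section Preservation

variable {A P S S' : Type} (T : Tnorm) {M : FLTS A P S} {M' : FLTS A P S'} {Z : S → S' → Prop}

lemma pformSem_baaz_le {φ : PForm A P} {x : S} {x' : S'}
    (h : pformSem T M φ x ≤ pformSem T M' φ x') :
    pformSem T M (.baaz φ) x ≤ pformSem T M' (.baaz φ) x' := by
  simp only [pformSem]
  by_cases hφ : pformSem T M φ x = 1
  · have hφ' : pformSem T M' φ x' = 1 := le_antisymm unitInterval.le_one' (hφ ▸ h)
    rw [if_pos hφ, if_pos hφ']
  · rw [if_neg hφ]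
    exact unitInterval.nonneg'

mutual

theorem preservation_dirSimulation_fposPDL_general (hZ : IsDirSimulation M M' Z) :
    ∀ (φ : PForm A P) (x : S) (x' : S'), Z x x' → pformSem T M φ x ≤ pformSem T M' φ x'
  | .const _, _, _, _ => le_rfl
  | .prop p, x, x', hx => hZ.1 x x' hx p
  | .baaz φ, x, x', hx =>
    pformSem_baaz_le T (preservation_dirSimulation_fposPDL_general hZ φ x x' hx)
  | .and φ ψ, x, x', hx =>
    min_le_min (preservation_dirSimulation_fposPDL_general hZ φ x x' hx)
      (preservation_dirSimulation_fposPDL_general hZ ψ x x' hx)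
  | .or φ ψ, x, x', hx =>
    max_le_max (preservation_dirSimulation_fposPDL_general hZ φ x x' hx)
      (preservation_dirSimulation_fposPDL_general hZ ψ x x' hx)
  | .impl _ φ, x, x', hx =>
    T.res_le_res le_rfl (preservation_dirSimulation_fposPDL_general hZ φ x x' hx)
  | .dia α φ, _, _, hx =>
    (fuzzySim_peSem hZ α).iSup_mul_le_iSup_mul T
      (preservation_dirSimulation_fposPDL_general hZ φ) hx
  | .box γ φ, _, _, hx =>
    (fuzzySim_puSem hZ γ).iInf_res_le_iInf_res T
      (preservation_dirSimulation_fposPDL_general hZ φ) hx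

theorem fuzzySim_peSem (hZ : IsDirSimulation M M' Z) :
    ∀ α : PEProg A P, FuzzySim Z (peSem T M α) (peSem T M' α)
  | .act ρ => .of_forall_exists_le fun x y x' => hZ.2.1 x y x' ρ
  | .comp α β => (fuzzySim_peSem hZ α).relComp T (fuzzySim_peSem hZ β)
  | .union α β => (fuzzySim_peSem hZ α).max (fuzzySim_peSem hZ β)
  | .star α => (fuzzySim_peSem hZ α).relStar T
  | .test φ => .relTest (preservation_dirSimulation_fposPDL_general hZ φ)

theorem fuzzySim_puSem (hZ : IsDirSimulation M M' Z) :
    ∀ γ : PUProg A P, FuzzySim (flip Z) (puSem T M' γ) (puSem T M γ)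
  | .act ρ => .of_forall_exists_le fun x' y' x => hZ.2.2 x x' y' ρ
  | .comp γ η => (fuzzySim_puSem hZ γ).relComp T (fuzzySim_puSem hZ η)
  | .union γ η => (fuzzySim_puSem hZ γ).max (fuzzySim_puSem hZ η)
  | .star γ => (fuzzySim_puSem hZ γ).relStar T
  | .testImp φ _ => .relTest fun x' x hx =>
    T.res_le_res (preservation_dirSimulation_fposPDL_general hZ φ x x' hx) le_rfl

end

end Preservation

/-- Formulas of fposΔPDL are preserved under crisp directed simulations between
FLTSs witnessed w.r.t. fposΔPDL. -/
theorem preservation_dirSimulation_fposPDL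
    {A P S S' : Type} [Nonempty A] [Nonempty P] [Nonempty S] [Nonempty S']
    (T : Tnorm) (M : FLTS A P S) (M' : FLTS A P S')
    (hM : WitnessedP T M) (hM' : WitnessedP T M')
    (Z : S → S' → Prop) (hZ : IsDirSimulation M M' Z) :
    ∀ (φ : PForm A P) (x : S) (x' : S'),
      Z x x' → pformSem T M φ x ≤ pformSem T M' φ x' :=
  preservation_dirSimulation_fposPDL_general T hZ
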